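/- Every critical cell σ of the matching μ on the face poset of Ind(G_m^d) satisfies σ ⊆ B, and every vertex a ∈ A is adjacent to some vertex of σ (equivalently, σ ∪ {a} is not an independent set for any a ∈ A). -/

import Mathlib

open Finset

/-- The graph `G_m^d` on vertex set `Fin m ⊕ Fin m` (0-based indexing):
`Sum.inl i` is the vertex `a_{i+1}` and `Sum.inr j` is the vertex `b_{j+1}` of the paper;
`a_i` is adjacent to `b_j` iff `(j - i) mod m ∈ {0, …, d-1}`. -/
def Gmd (m d : ℕ) : SimpleGraph (Fin m ⊕ Fin m) :=
  SimpleGraph.fromRel (fun u v =>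
    ∃ i j : Fin m, u = Sum.inl i ∧ v = Sum.inr j ∧ (j.val + m - i.val) % m < d)

/-- A finite set of vertices is independent iff no two of its elements are adjacent. -/
def IsInd (m d : ℕ) (σ : Finset (Fin m ⊕ Fin m)) : Prop :=
  ∀ u ∈ σ, ∀ v ∈ σ, ¬ (Gmd m d).Adj u v

/-- The face poset `P` of the independence complex `Ind (G_m^d)` (ordered by `⊆`),
including the empty simplex. -/
def faceP (m d : ℕ) : Set (Finset (Fin m ⊕ Fin m)) := {σ | IsInd m d σ}

/-- One step of the matching construction: `S_x(T) = {σ ∈ T | x ∉ σ, σ ∪ {x} ∈ T}`. -/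
def stepS {α : Type*} [DecidableEq α] (x : α) (T : Set (Finset α)) : Set (Finset α) :=
  {σ | σ ∈ T ∧ x ∉ σ ∧ insert x σ ∈ T}

/-- The survivors of one step: `T \ (S_x(T) ∪ μ_x(S_x(T)))`. -/
def stepSurv {α : Type*} [DecidableEq α] (x : α) (T : Set (Finset α)) : Set (Finset α) :=
  T \ (stepS x T ∪ (insert x) '' (stepS x T))

/-- Iterating the matching construction along a list of vertices. -/
def phase {α : Type*} [DecidableEq α] (T : Set (Finset α)) (l : List α) : Set (Finset α) :=
  l.foldl (fun T x => stepSurv x T) T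

/-- The list `a_1, …, a_m`. -/
def listA (m : ℕ) : List (Fin m ⊕ Fin m) := (List.finRange m).map Sum.inl
/-- The list `b_1, …, b_m`. -/
def listB (m : ℕ) : List (Fin m ⊕ Fin m) := (List.finRange m).map Sum.inr

/-- `S_{a_{i+1}}` (0-based `i`): the set matched with `a_{i+1}` at stage `i+1` of phase one. -/
def Sa (m d : ℕ) (i : Fin m) : Set (Finset (Fin m ⊕ Fin m)) :=
  stepS (Sum.inl i) (phase (faceP m d) ((listA m).take i.val))

/-- `M = P \ (S_1 ∪ μ_1(S_1))`, the simplices surviving phase one. -/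
def setM (m d : ℕ) : Set (Finset (Fin m ⊕ Fin m)) := phase (faceP m d) (listA m)

/-- `S_{b_{i+1}}` (0-based `i`): the set matched with `b_{i+1}` at stage `i+1` of phase two. -/
def Sb (m d : ℕ) (i : Fin m) : Set (Finset (Fin m ⊕ Fin m)) :=
  stepS (Sum.inr i) (phase (setM m d) ((listB m).take i.val))

/-- `𝒮_{a_{i+1}} = S_{a_{i+1}} ∪ μ_{a_{i+1}}(S_{a_{i+1}})`. -/
def scriptSa (m d : ℕ) (i : Fin m) : Set (Finset (Fin m ⊕ Fin m)) :=
  Sa m d i ∪ (insert (Sum.inl i)) '' (Sa m d i)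

/-- `𝒮_{b_{i+1}} = S_{b_{i+1}} ∪ μ_{b_{i+1}}(S_{b_{i+1}})`. -/
def scriptSb (m d : ℕ) (i : Fin m) : Set (Finset (Fin m ⊕ Fin m)) :=
  Sb m d i ∪ (insert (Sum.inr i)) '' (Sb m d i)

/-- The critical cells `C = P \ (S ∪ μ(S))`. -/
def setC (m d : ℕ) : Set (Finset (Fin m ⊕ Fin m)) :=
  faceP m d \ ((⋃ i : Fin m, scriptSa m d i) ∪ (⋃ i : Fin m, scriptSb m d i))

/-- The matching relation: `MatchRel σ τ` iff `τ = μ(σ)` for `σ ∈ S = S_1 ∪ S_2`. -/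
def MatchRel (m d : ℕ) (σ τ : Finset (Fin m ⊕ Fin m)) : Prop :=
  (∃ i : Fin m, σ ∈ Sa m d i ∧ τ = insert (Sum.inl i) σ) ∨
  (∃ i : Fin m, σ ∈ Sb m d i ∧ τ = insert (Sum.inr i) σ)

/-- `B_{s+1} = {b_{s+1}, b_{s+2}, …, b_{s+m-d}}` (0-based `s`, subscripts mod `m`). -/
def Bset (m d : ℕ) (s : Fin m) : Finset (Fin m ⊕ Fin m) :=
  (Finset.univ.filter (fun j : Fin m => (j.val + m - s.val) % m < m - d)).image Sum.inr

/-- `b_{n+1} ∈ σ` (0-based subscript `n`). -/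
def hasB (m : ℕ) (σ : Finset (Fin m ⊕ Fin m)) (n : ℕ) : Prop :=
  ∃ j : Fin m, j.val = n ∧ Sum.inr j ∈ σ

/-- `σ ⊆ B`. -/
def onlyB (m : ℕ) (σ : Finset (Fin m ⊕ Fin m)) : Prop :=
  ∀ v ∈ σ, ∃ j : Fin m, v = Sum.inr j

/-- Property `P_l` of the paper, with parameter `j1` (0-based: the paper's `j_1 - 1`, so
`1 ≤ j1 ≤ d`).  With 0-based subscripts `i_r = (r-1)(d+1)`, `j_r = j1 + (r-1)(d+1)` and
`k = m + j1 - (d+1)`:  σ ∈ M, σ ⊆ B, the `2l` smallest subscripts of σ are exactly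
`0 = i_1, j_1, i_2, j_2, …, i_l, j_l`, the largest subscript is `k`, and
`σ \ {b_{i_r}} ∉ M`, `σ \ {b_{j_r}} ∉ M` for all `1 ≤ r ≤ l`. -/
def propP (m d l j1 : ℕ) (σ : Finset (Fin m ⊕ Fin m)) : Prop :=
  σ ∈ setM m d ∧ onlyB m σ ∧ 1 ≤ j1 ∧ j1 ≤ d ∧
  (∀ r, 1 ≤ r → r ≤ l → hasB m σ ((r-1)*(d+1)) ∧ hasB m σ (j1 + (r-1)*(d+1))) ∧
  (∀ j : Fin m, Sum.inr j ∈ σ → j.val ≤ j1 + (l-1)*(d+1) →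
      ∃ r, 1 ≤ r ∧ r ≤ l ∧ (j.val = (r-1)*(d+1) ∨ j.val = j1 + (r-1)*(d+1))) ∧
  hasB m σ (m + j1 - (d+1)) ∧
  (∀ j : Fin m, Sum.inr j ∈ σ → j.val ≤ m + j1 - (d+1)) ∧
  (∀ r, 1 ≤ r → r ≤ l → ∀ j : Fin m,
      (j.val = (r-1)*(d+1) ∨ j.val = j1 + (r-1)*(d+1)) → σ.erase (Sum.inr j) ∉ setM m d)

/-!
For a set `A` of pairwise non-adjacent vertices, adding or deleting an element `x ∈ A` does not
change which other elements of `A` have a neighbour in a cell. By induction, the cells left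
unmatched after the vertices `a₁, …, aₖ` are therefore exactly the independent sets that contain a
neighbour of each of `a₁, …, aₖ`. Such a set cannot itself contain any `aᵢ`.
-/

section Matching

variable {α : Type*} [DecidableEq α] {x : α} {T : Set (Finset α)} {σ : Finset α}

theorem mem_stepSurv_iff_of_erase_mem (hT : ∀ τ ∈ T, τ.erase x ∈ T) :
    σ ∈ stepSurv x T ↔ σ ∈ T ∧ insert x σ ∉ T := by
  constructor
  · rintro ⟨hσ, hunmatched⟩
    refine ⟨hσ, fun hins => hunmatched ?_⟩
    by_cases hx : x ∈ σ
    · have hinsert : insert x (σ.erase x) = σ := insert_erase hx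
      exact .inr ⟨σ.erase x, ⟨hT σ hσ, notMem_erase x σ, hinsert.symm ▸ hσ⟩, hinsert⟩
    · exact .inl ⟨hσ, hx, hins⟩
  · rintro ⟨hσ, hins⟩
    refine ⟨hσ, ?_⟩
    rintro (⟨-, -, hinsert⟩ | ⟨τ, ⟨-, -, hτ⟩, rfl⟩)
    · exact hins hinsert
    · exact hins (by simpa only [insert_idem] using hτ)

theorem phase_append_singleton (T : Set (Finset α)) (l : List α) (x : α) :
    phase T (l ++ [x]) = stepSurv x (phase T l) := by
  simp only [phase, List.foldl_append, List.foldl_cons, List.foldl_nil]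

theorem mem_phase_iff {l : List α} :
    σ ∈ phase T l ↔ σ ∈ T ∧ ∀ (n : ℕ) (hn : n < l.length),
      σ ∉ stepS l[n] (phase T (l.take n)) ∪ insert l[n] '' stepS l[n] (phase T (l.take n)) := by
  induction l generalizing T with
  | nil => simp [phase]
  | cons x l ih =>
    have hcons : phase T (x :: l) = phase (stepSurv x T) l := rfl
    rw [hcons, ih]
    refine Iff.trans ?_ (and_congr_right' Nat.forall_lt_succ_left'.symm)
    rw [← and_assoc]
    -- Index `0` says that `σ` survives the step at `x`; index `n + 1` reduces to index `n` of `l`.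
    rfl

end Matching

section IndependentSets

variable {V : Type*} {G : SimpleGraph V}

/-- The cells of the independence complex of `G` that dominate `A`: the finite independent sets
containing a neighbour of every vertex of `A`. These turn out to be the cells that the matching
along the elements of `A` leaves unmatched. -/
def dominatingIndepSets (G : SimpleGraph V) (A : Set V) : Set (Finset V) :=
  {σ | G.IsIndepSet (σ : Set V) ∧ ∀ a ∈ A, ∃ v ∈ σ, G.Adj a v}

variable {A : Set V} {x : V} {σ : Finset V}

theorem notMem_of_mem_dominatingIndepSets (hσ : σ ∈ dominatingIndepSets G A) (hx : x ∈ A) :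
    x ∉ σ := by
  intro hxσ
  obtain ⟨v, hv, hadj⟩ := hσ.2 x hx
  exact hσ.1 hxσ hv hadj.ne hadj

variable [DecidableEq V]

theorem isIndepSet_insert_iff :
    G.IsIndepSet (insert x σ : Finset V) ↔
      G.IsIndepSet (σ : Set V) ∧ ∀ v ∈ σ, ¬ G.Adj x v := by
  rw [coe_insert, SimpleGraph.IsIndepSet, Set.pairwise_insert]
  refine and_congr_right fun _ => forall₂_congr fun v _ => ?_
  rw [G.adj_comm v x, and_self]
  exact ⟨fun h hadj => h hadj.ne hadj, fun h _ => h⟩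

theorem erase_mem_dominatingIndepSets (hx : ∀ a ∈ A, ¬ G.Adj a x)
    (hσ : σ ∈ dominatingIndepSets G A) : σ.erase x ∈ dominatingIndepSets G A := by
  refine ⟨hσ.1.mono (coe_subset.2 (erase_subset x σ)), fun a ha => ?_⟩
  obtain ⟨v, hv, hadj⟩ := hσ.2 a ha
  have hvx : v ≠ x := fun h => hx a ha (h ▸ hadj)
  exact ⟨v, mem_erase.2 ⟨hvx, hv⟩, hadj⟩

theorem insert_mem_dominatingIndepSets_iff (hσ : σ ∈ dominatingIndepSets G A) :
    insert x σ ∈ dominatingIndepSets G A ↔ ∀ v ∈ σ, ¬ G.Adj x v := by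
  refine ⟨fun h => (isIndepSet_insert_iff.1 h.1).2, fun h => ?_⟩
  refine ⟨isIndepSet_insert_iff.2 ⟨hσ.1, h⟩, fun a ha => ?_⟩
  obtain ⟨v, hv, hadj⟩ := hσ.2 a ha
  exact ⟨v, mem_insert_of_mem hv, hadj⟩

theorem stepSurv_dominatingIndepSets (hx : ∀ a ∈ A, ¬ G.Adj a x) :
    stepSurv x (dominatingIndepSets G A) = dominatingIndepSets G (insert x A) := by
  ext σ
  calc σ ∈ stepSurv x (dominatingIndepSets G A)
      ↔ σ ∈ dominatingIndepSets G A ∧ insert x σ ∉ dominatingIndepSets G A :=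
        mem_stepSurv_iff_of_erase_mem fun _ => erase_mem_dominatingIndepSets hx
    _ ↔ σ ∈ dominatingIndepSets G A ∧ ∃ v ∈ σ, G.Adj x v :=
        and_congr_right fun hσ => by
          simp only [insert_mem_dominatingIndepSets_iff hσ, not_forall, not_not, exists_prop]
    _ ↔ σ ∈ dominatingIndepSets G (insert x A) := by
        simp only [dominatingIndepSets, Set.mem_ofPred_eq, Set.forall_mem_insert]
        tauto

theorem phase_isIndepSet_eq_dominatingIndepSets {l : List V} (hl : G.IsIndepSet {x | x ∈ l}) :
    phase {σ | G.IsIndepSet (σ : Set V)} l = dominatingIndepSets G {x | x ∈ l} := by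
  induction l using List.reverseRecOn with
  | nil => simp [phase, dominatingIndepSets]
  | append_singleton l x ih =>
    have hmem : {y | y ∈ l ++ [x]} = insert x {y | y ∈ l} := by ext y; simp [or_comm]
    rw [hmem] at hl ⊢
    have hx : ∀ a ∈ {y | y ∈ l}, ¬ G.Adj a x := fun a ha hadj =>
      hl (Set.mem_insert_of_mem x ha) (Set.mem_insert x _) hadj.ne hadj
    rw [phase_append_singleton, ih (hl.mono (Set.subset_insert x _)),
      stepSurv_dominatingIndepSets hx]

theorem stmt2_general {l : List V} (hl : G.IsIndepSet {x | x ∈ l})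
    (hσ : σ ∈ phase {τ | G.IsIndepSet (τ : Set V)} l) :
    (∀ v ∈ σ, v ∉ l) ∧ (∀ a ∈ l, ∃ v ∈ σ, G.Adj a v) ∧
      ∀ a ∈ l, ¬ G.IsIndepSet (insert a σ : Finset V) := by
  rw [phase_isIndepSet_eq_dominatingIndepSets hl] at hσ
  refine ⟨fun v hv hvl => notMem_of_mem_dominatingIndepSets hσ hvl hv, hσ.2, fun a ha hins => ?_⟩
  obtain ⟨v, hv, hadj⟩ := hσ.2 a ha
  exact (isIndepSet_insert_iff.1 hins).2 v hv hadj

end IndependentSets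

section Gmd

variable {m d : ℕ}

theorem isInd_iff_isIndepSet {σ : Finset (Fin m ⊕ Fin m)} :
    IsInd m d σ ↔ (Gmd m d).IsIndepSet (σ : Set (Fin m ⊕ Fin m)) :=
  ⟨fun h u hu v hv _ => h u hu v hv, fun h _ hu _ hv hadj => h hu hv hadj.ne hadj⟩

theorem setM_eq_phase_isIndepSet :
    setM m d = phase {σ : Finset (Fin m ⊕ Fin m) | (Gmd m d).IsIndepSet σ} (listA m) :=
  congrArg (phase · (listA m)) (Set.ext fun _ => isInd_iff_isIndepSet)

theorem not_adj_inl_inl (i j : Fin m) : ¬ (Gmd m d).Adj (Sum.inl i) (Sum.inl j) := by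
  simp [Gmd]

theorem isIndepSet_listA : (Gmd m d).IsIndepSet {x | x ∈ listA m} := by
  simp [listA, Set.Pairwise, not_adj_inl_inl]

theorem notMem_listA_iff {v : Fin m ⊕ Fin m} : v ∉ listA m ↔ ∃ j, v = Sum.inr j := by
  cases v <;> simp [listA]

theorem setC_subset_setM : setC m d ⊆ setM m d := by
  rintro σ ⟨hσ, hunmatched⟩
  refine mem_phase_iff.2 ⟨hσ, fun n hn hmatched => hunmatched (.inl ?_)⟩
  have hnm : n < m := by simpa [listA] using hn
  refine Set.mem_iUnion.2 ⟨⟨n, hnm⟩, ?_⟩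
  simpa [scriptSa, Sa, listA] using hmatched

end Gmd

/-- every critical cell `σ` satisfies `σ ⊆ B`, and every vertex `a ∈ A` is
adjacent to some vertex of `σ` (equivalently, `σ ∪ {a}` is not independent for any `a ∈ A`). -/
theorem stmt2 (m d : ℕ) (hd : 1 ≤ d) (hdm : d ≤ m)
    (σ : Finset (Fin m ⊕ Fin m)) (hσ : σ ∈ setC m d) :
    onlyB m σ ∧
    (∀ i : Fin m, ∃ v ∈ σ, (Gmd m d).Adj (Sum.inl i) v) ∧
    (∀ i : Fin m, ¬ IsInd m d (insert (Sum.inl i) σ)) := by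
  simpa [onlyB, notMem_listA_iff, isInd_iff_isIndepSet, listA] using
    stmt2_general isIndepSet_listA (setM_eq_phase_isIndepSet.subset (setC_subset_setM hσ))
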